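/- Let x be a real number and let a, d be complex numbers with d ≠ 0, 4a+2 ≠ 0, such that a, a+1/2, a+1, a+3/2, a+2 and d are not nonpositive integers or zero. Then Σ_{k=0}^∞ (a/2)_k ((a+1)/2)_k (d+1)_k (−x²)^k / ((a+1/2)_k (a+1)_k (d)_k k!) = Σ_{k=0}^∞ (a/2)_k ((a+1)/2)_k (−x²)^k / ((a)_k (a+1/2)_k k!) + (x² (1 − a/d)/(4a+2)) · Σ_{k=0}^∞ (a/2+1)_k (a/2+3/2)_k (−x²)^k / ((a+3/2)_k (a+2)_k k!). -/

import Mathlib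

/-- The Pochhammer symbol `(a)_k = a (a+1) ⋯ (a+k-1)`. -/
noncomputable def poch (a : ℂ) (k : ℕ) : ℂ := Polynomial.eval a (ascPochhammer ℂ k)

theorem poch_succ (a : ℂ) (k : ℕ) : poch a (k + 1) = poch a k * (a + k) := by
  simp [poch, ascPochhammer_succ_eval]

theorem poch_left (a : ℂ) (k : ℕ) : poch a (k + 1) = a * poch (a + 1) k := by
  simp [poch, ascPochhammer_succ_left]

theorem poch_shift (a : ℂ) (k : ℕ) : a * poch (a + 1) k = poch a k * (a + k) := by
  rw [← poch_left, poch_succ]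

theorem poch_ne_zero (a : ℂ) (h : ∀ n : ℕ, a ≠ -(n : ℂ)) (k : ℕ) : poch a k ≠ 0 := by
  induction k with
  | zero => simp [poch]
  | succ k ih =>
    rw [poch_succ]
    exact mul_ne_zero ih (fun h' => h k (by linear_combination h'))

theorem summable_aux (p q r s z : ℂ) (hr : ∀ n : ℕ, r ≠ -(n : ℂ)) (hs : ∀ n : ℕ, s ≠ -(n : ℂ)) :
    Summable (fun k : ℕ => poch p k * poch q k * z ^ k /
      (poch r k * poch s k * (Nat.factorial k : ℂ))) := by
  have t1 := tendsto_add_mul_div_add_mul_atTop_nhds p r (1 : ℂ) (one_ne_zero (α := ℂ))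
  have t2 := tendsto_add_mul_div_add_mul_atTop_nhds q s (1 : ℂ) (one_ne_zero (α := ℂ))
  have t3 := tendsto_add_mul_div_add_mul_atTop_nhds z 1 (0 : ℂ) (one_ne_zero (α := ℂ))
  have t := ((t1.mul t2).mul t3).norm
  simp only [zero_div, mul_zero, norm_zero] at t
  have ev := t.eventually (gt_mem_nhds (show (0 : ℝ) < 1 / 2 by norm_num))
  refine summable_of_ratio_norm_eventually_le (r := 1 / 2) (by norm_num) ?_
  filter_upwards [ev] with k hk
  have n1 := poch_ne_zero r hr k
  have n2 := poch_ne_zero s hs k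
  have m1 : r + k ≠ 0 := fun h => hr k (by linear_combination h)
  have m2 : s + k ≠ 0 := fun h => hs k (by linear_combination h)
  have nf : (Nat.factorial k : ℂ) ≠ 0 := by exact_mod_cast Nat.factorial_ne_zero k
  have nj : (1 : ℂ) + k ≠ 0 := by rw [add_comm]; exact_mod_cast Nat.succ_ne_zero k
  have e : poch p (k + 1) * poch q (k + 1) * z ^ (k + 1) /
      (poch r (k + 1) * poch s (k + 1) * (Nat.factorial (k + 1) : ℂ)) =
      ((p + 1 * k) / (r + 1 * k) * ((q + 1 * k) / (s + 1 * k)) * ((z + 0 * k) / (1 + 1 * k))) *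
      (poch p k * poch q k * z ^ k / (poch r k * poch s k * (Nat.factorial k : ℂ))) := by
    simp only [poch_succ, Nat.factorial_succ, pow_succ, one_mul, zero_mul, add_zero]
    push_cast
    rw [add_comm (k : ℂ) 1]
    field_simp
  rw [e, norm_mul]
  exact mul_le_mul_of_nonneg_right hk.le (norm_nonneg _)

/-- Contiguous relation for the `₃F₃` in Example (d):
`₃F₃(a/2, (a+1)/2, d+1; a+1/2, a+1, d; -x²)
  = ₂F₂(a/2, (a+1)/2; a, a+1/2; -x²)
    + (x²(1-a/d)/(4a+2)) ₂F₂(a/2+1, a/2+3/2; a+3/2, a+2; -x²)`. -/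
theorem contiguous_3F3
    (x : ℝ) (a d : ℂ)
    (hd0 : d ≠ 0)
    (h4a2 : 4 * a + 2 ≠ 0)
    (ha : ∀ n : ℕ, a ≠ -(n : ℂ))
    (ha1 : ∀ n : ℕ, a + 1 / 2 ≠ -(n : ℂ))
    (hap1 : ∀ n : ℕ, a + 1 ≠ -(n : ℂ))
    (ha3 : ∀ n : ℕ, a + 3 / 2 ≠ -(n : ℂ))
    (hap2 : ∀ n : ℕ, a + 2 ≠ -(n : ℂ))
    (hd : ∀ n : ℕ, d ≠ -(n : ℂ)) :
    ∑' k : ℕ, poch (a / 2) k * poch ((a + 1) / 2) k * poch (d + 1) k *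
        (-(x : ℂ) ^ 2) ^ k /
        (poch (a + 1 / 2) k * poch (a + 1) k * poch d k * (Nat.factorial k : ℂ))
      = (∑' k : ℕ, poch (a / 2) k * poch ((a + 1) / 2) k * (-(x : ℂ) ^ 2) ^ k /
            (poch a k * poch (a + 1 / 2) k * (Nat.factorial k : ℂ)))
        + ((x : ℂ) ^ 2 * (1 - a / d) / (4 * a + 2)) *
          ∑' k : ℕ, poch (a / 2 + 1) k * poch (a / 2 + 3 / 2) k * (-(x : ℂ) ^ 2) ^ k /
            (poch (a + 3 / 2) k * poch (a + 2) k * (Nat.factorial k : ℂ)) := by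
  have hz := poch_ne_zero
  have h1 := summable_aux (a / 2) ((a + 1) / 2) a (a + 1 / 2) (-(x : ℂ) ^ 2) ha ha1
  have h2 := summable_aux (a / 2 + 1) (a / 2 + 3 / 2) (a + 3 / 2) (a + 2) (-(x : ℂ) ^ 2) ha3 hap2
  have ha0 : a ≠ 0 := by simpa using ha 0
  have hap10 : a + 1 ≠ 0 := by simpa using hap1 0
  have key : ∀ k : ℕ, poch (a / 2) k * poch ((a + 1) / 2) k * poch (d + 1) k *
        (-(x : ℂ) ^ 2) ^ k /
        (poch (a + 1 / 2) k * poch (a + 1) k * poch d k * (Nat.factorial k : ℂ))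
      = poch (a / 2) k * poch ((a + 1) / 2) k * (-(x : ℂ) ^ 2) ^ k /
            (poch a k * poch (a + 1 / 2) k * (Nat.factorial k : ℂ))
        + poch (a / 2) k * poch ((a + 1) / 2) k * (-(x : ℂ) ^ 2) ^ k /
            (poch (a + 1 / 2) k * poch (a + 1) k * (Nat.factorial k : ℂ)) *
            ((k : ℂ) * (1 / d - 1 / a)) := by
    intro k
    have e1 := poch_shift a k
    have e2 := poch_shift d k
    have n1 := hz a ha k
    have n2 := hz _ ha1 k
    have n3 := hz _ hap1 k
    have n4 := hz d hd k
    have nf : (Nat.factorial k : ℂ) ≠ 0 := by exact_mod_cast Nat.factorial_ne_zero k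
    have e2' : poch (d + 1) k = poch d k * (d + k) / d := by
      field_simp; linear_combination e2
    have hak : a + k ≠ 0 := fun h => ha k (by linear_combination h)
    have e1' : poch (a + 1) k = poch a k * (a + k) / a := by
      field_simp; linear_combination e1
    rw [e2', e1']
    field_simp
    ring
  have hG : ∀ j : ℕ, poch (a / 2) (j + 1) * poch ((a + 1) / 2) (j + 1) *
            (-(x : ℂ) ^ 2) ^ (j + 1) /
            (poch (a + 1 / 2) (j + 1) * poch (a + 1) (j + 1) * (Nat.factorial (j + 1) : ℂ)) *
            (((j + 1 : ℕ) : ℂ) * (1 / d - 1 / a))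
      = ((x : ℂ) ^ 2 * (1 - a / d) / (4 * a + 2)) *
          (poch (a / 2 + 1) j * poch (a / 2 + 3 / 2) j * (-(x : ℂ) ^ 2) ^ j /
            (poch (a + 3 / 2) j * poch (a + 2) j * (Nat.factorial j : ℂ))) := by
    intro j
    have n1 := hz _ ha3 j
    have n2 := hz _ hap2 j
    have nf : (Nat.factorial j : ℂ) ≠ 0 := by exact_mod_cast Nat.factorial_ne_zero j
    have nj : (j : ℂ) + 1 ≠ 0 := by exact_mod_cast Nat.succ_ne_zero j
    have h12 : a + 1 / 2 ≠ 0 := by simpa using ha1 0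
    have q1 : (a + 1) / 2 + 1 = a / 2 + 3 / 2 := by ring
    have q2 : a + 1 / 2 + 1 = a + 3 / 2 := by ring
    have q3 : a + 1 + 1 = a + 2 := by ring
    have q4 : a + 1 / 2 = (4 * a + 2) / 4 := by ring
    rw [poch_left (a / 2), poch_left ((a + 1) / 2), poch_left (a + 1 / 2), poch_left (a + 1),
      q1, q2, q3, q4, Nat.factorial_succ, pow_succ]
    push_cast
    generalize poch (a / 2 + 1) j = A
    generalize poch (a / 2 + 3 / 2) j = B
    generalize poch (a + 3 / 2) j = C at *
    generalize poch (a + 2) j = D at *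
    generalize (-(x : ℂ) ^ 2) ^ j = Z
    generalize hE : 4 * a + 2 = E at *
    field_simp
    ring
  have h3 := h2.mul_left ((x : ℂ) ^ 2 * (1 - a / d) / (4 * a + 2))
  have h4 := (summable_nat_add_iff (f := fun k : ℕ => poch (a / 2) k * poch ((a + 1) / 2) k *
      (-(x : ℂ) ^ 2) ^ k / (poch (a + 1 / 2) k * poch (a + 1) k * (Nat.factorial k : ℂ)) *
            ((k : ℂ) * (1 / d - 1 / a))) 1).1 (h3.congr (fun j => (hG j).symm))
  rw [tsum_congr key, h1.tsum_add h4, h4.tsum_eq_zero_add, tsum_congr hG, tsum_mul_left]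
  simp
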